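/- arXiv:1411.3184 — 2 statements merged into one kernel-verified Lean document; each statement's English description precedes it below -/
import Mathlib

section
/- Let k ≥ 1, let X be a compact topological space equipped with a nonzero finite Borel measure μ, and let g : ℝᵏ → ℝᵏ be continuous and bounded such that there exists ρ > 0 with g(w) ≠ 0 whenever ‖w‖ ≥ ρ, and such that there exists a map φ : S^{k-1} → ℝᵏ with g(rz)/‖g(rz)‖ → φ(z) as r → ∞, uniformly for z ∈ S^{k-1} (i.e. for every ε > 0 there is r₀ ≥ ρ such that for all r ≥ r₀ and all z ∈ S^{k-1}, ‖g(rz)/‖g(rz)‖ − φ(z)‖ ≤ ε). Then for every constant C > 0 there exists R > 0 such that for every continuous function u : X → ℝᵏ whose average ū := (1/μ(X)) ∫_X u dμ satisfies ‖ū‖ ≥ R and sup_{x ∈ X} ‖u(x) − ū‖ ≤ C, one has ∫_X g(u(x)) dμ(x) ≠ 0. -/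
open MeasureTheory Filter
open scoped RealInnerProductSpace

theorem aux_normalize {E : Type*} [NormedAddCommGroup E] [NormedSpace ℝ E] (w v : E)
    (hw : 0 < ‖w‖) (hv : 0 < ‖v‖) :
    ‖‖w‖⁻¹ • w - ‖v‖⁻¹ • v‖ ≤ 2 * ‖w - v‖ / ‖v‖ := by
  have h1 : ‖w‖⁻¹ • w - ‖v‖⁻¹ • v = ‖v‖⁻¹ • (w - v) + (‖w‖⁻¹ - ‖v‖⁻¹) • w := by
    module
  have h2 : |‖w‖⁻¹ - ‖v‖⁻¹| * ‖w‖ = |‖v‖ - ‖w‖| / ‖v‖ := by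
    have : ‖w‖⁻¹ - ‖v‖⁻¹ = (‖v‖ - ‖w‖) / (‖w‖ * ‖v‖) := by field_simp
    rw [this, abs_div, abs_of_pos (mul_pos hw hv)]
    field_simp
  have h3 : |‖v‖ - ‖w‖| ≤ ‖w - v‖ := by
    rw [abs_sub_comm]; exact abs_norm_sub_norm_le w v
  rw [h1]
  refine (norm_add_le _ _).trans ?_
  rw [norm_smul, norm_smul, Real.norm_eq_abs, Real.norm_eq_abs, h2, abs_of_pos (inv_pos.2 hv)]
  have h4 : |‖v‖ - ‖w‖| / ‖v‖ ≤ ‖w - v‖ / ‖v‖ := by gcongr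
  have h5 : ‖v‖⁻¹ * ‖w - v‖ = ‖w - v‖ / ‖v‖ := by ring
  rw [h5, mul_div_assoc]
  linarith

/-- Lemma 1 of the paper: if `g` is continuous, bounded, nonvanishing outside a ball,
and its radial normalizations converge uniformly on the unit sphere to `φ`, then for
every `C > 0` there is `R > 0` such that any continuous `u : X → ℝᵏ` whose average `ū`
satisfies `‖ū‖ ≥ R` and `‖u x - ū‖ ≤ C` for all `x` has `∫ g (u x) dμ ≠ 0`. -/
theorem stmt_0 (k : ℕ) (hk : 1 ≤ k)
    (X : Type*) [TopologicalSpace X] [CompactSpace X]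
    [MeasurableSpace X] [BorelSpace X]
    (μ : Measure X) [IsFiniteMeasure μ] (hμ : μ ≠ 0)
    (g : EuclideanSpace ℝ (Fin k) → EuclideanSpace ℝ (Fin k))
    (hg_cont : Continuous g)
    (M : ℝ) (hg_bdd : ∀ w, ‖g w‖ ≤ M)
    (ρ : ℝ) (hρ : 0 < ρ)
    (hg_ne : ∀ w : EuclideanSpace ℝ (Fin k), ρ ≤ ‖w‖ → g w ≠ 0)
    (φ : EuclideanSpace ℝ (Fin k) → EuclideanSpace ℝ (Fin k))
    (hφ : ∀ ε > (0 : ℝ), ∃ r₀ : ℝ, ρ ≤ r₀ ∧ ∀ r : ℝ, r₀ ≤ r →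
      ∀ z : EuclideanSpace ℝ (Fin k), ‖z‖ = 1 →
        ‖‖g (r • z)‖⁻¹ • g (r • z) - φ z‖ ≤ ε)
    (C : ℝ) (hC : 0 < C) :
    ∃ R > (0 : ℝ), ∀ u : X → EuclideanSpace ℝ (Fin k), Continuous u →
      R ≤ ‖(μ Set.univ).toReal⁻¹ • ∫ x, u x ∂μ‖ →
      (∀ x : X, ‖u x - (μ Set.univ).toReal⁻¹ • ∫ y, u y ∂μ‖ ≤ C) →
      (∫ x, g (u x) ∂μ) ≠ 0 := by
  obtain ⟨r₀, hr₀, H⟩ := hφ (1/8) (by norm_num)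
  have hr₀p : 0 < r₀ := lt_of_lt_of_le hρ hr₀
  set h : EuclideanSpace ℝ (Fin k) → EuclideanSpace ℝ (Fin k) := fun w => ‖g w‖⁻¹ • g w with hh
  have hcont : ContinuousOn (fun z => h (r₀ • z))
      (Metric.sphere (0 : EuclideanSpace ℝ (Fin k)) 1) := by
    have hc : Continuous fun z : EuclideanSpace ℝ (Fin k) => g (r₀ • z) := by fun_prop
    refine ContinuousOn.smul (ContinuousOn.inv₀ hc.norm.continuousOn ?_) hc.continuousOn
    intro z hz
    rw [mem_sphere_zero_iff_norm] at hz
    refine norm_ne_zero_iff.2 (hg_ne _ ?_)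
    rw [norm_smul, hz, mul_one, Real.norm_eq_abs, abs_of_pos hr₀p]
    exact hr₀
  have huc := (isCompact_sphere (0 : EuclideanSpace ℝ (Fin k)) 1).uniformContinuousOn_of_continuous
    hcont
  obtain ⟨δ, hδ, huc⟩ := Metric.uniformContinuousOn_iff.1 huc (1/8) (by norm_num)
  have hCδ : 0 < 2 * C / δ := by positivity
  refine ⟨r₀ + C + 2 * C / δ + 1, by positivity, ?_⟩
  intro u hu hR hsup
  set v := (μ Set.univ).toReal⁻¹ • ∫ x, u x ∂μ with hv
  have hvp : 0 < ‖v‖ := by linarith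
  have key : ∀ x, 0 < ⟪h v, g (u x)⟫ := by
    intro x
    have hx := hsup x
    have hwr : r₀ ≤ ‖u x‖ := by
      have := norm_sub_norm_le v (u x)
      rw [norm_sub_rev] at this
      linarith
    have hwp : 0 < ‖u x‖ := by linarith
    have unit : ∀ w : EuclideanSpace ℝ (Fin k), 0 < ‖w‖ → ‖‖w‖⁻¹ • w‖ = 1 := by
      intro w hw
      rw [norm_smul, norm_inv, norm_norm, inv_mul_cancel₀ hw.ne']
    have resc : ∀ w : EuclideanSpace ℝ (Fin k), 0 < ‖w‖ → ‖w‖ • (‖w‖⁻¹ • w) = w := by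
      intro w hw
      rw [smul_smul, mul_inv_cancel₀ hw.ne', one_smul]
    have gpos : ∀ w : EuclideanSpace ℝ (Fin k), r₀ ≤ ‖w‖ → 0 < ‖g w‖ := fun w hw =>
      norm_pos_iff.2 (hg_ne w (hr₀.trans hw))
    have hvr : r₀ ≤ ‖v‖ := by linarith
    have d1 := H ‖u x‖ hwr _ (unit _ hwp)
    have d2 := H ‖v‖ hvr _ (unit _ hvp)
    have d3 := H r₀ le_rfl _ (unit _ hwp)
    have d4 := H r₀ le_rfl _ (unit _ hvp)
    rw [resc _ hwp] at d1
    rw [resc _ hvp] at d2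
    have hz : dist (‖u x‖⁻¹ • u x) (‖v‖⁻¹ • v) < δ := by
      rw [dist_eq_norm]
      refine (aux_normalize _ _ hwp hvp).trans_lt ?_
      rw [div_lt_iff₀ hvp]
      have : 2 * C / δ < ‖v‖ := by linarith
      rw [div_lt_iff₀ hδ] at this
      linarith
    have d5 := huc _ (mem_sphere_zero_iff_norm.2 (unit _ hwp)) _
      (mem_sphere_zero_iff_norm.2 (unit _ hvp)) hz
    rw [dist_eq_norm] at d5
    change ‖h (u x) - _‖ ≤ _ at d1
    change ‖h v - _‖ ≤ _ at d2
    change ‖h (r₀ • _) - _‖ ≤ _ at d3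
    change ‖h (r₀ • _) - _‖ ≤ _ at d4
    generalize φ (‖u x‖⁻¹ • u x) = p1 at *
    generalize φ (‖v‖⁻¹ • v) = p2 at *
    generalize h (r₀ • (‖u x‖⁻¹ • u x)) = q1 at *
    generalize h (r₀ • (‖v‖⁻¹ • v)) = q2 at *
    have tot : ‖h v - h (u x)‖ < 1 := by
      have e : h v - h (u x) = (h v - p2) - (q2 - p2) - (q1 - q2) + (q1 - p1) - (h (u x) - p1) := by
        abel
      rw [e]
      have t1 := norm_sub_le ((h v - p2) - (q2 - p2) - (q1 - q2) + (q1 - p1)) (h (u x) - p1)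
      have t2 := norm_add_le ((h v - p2) - (q2 - p2) - (q1 - q2)) (q1 - p1)
      have t3 := norm_sub_le ((h v - p2) - (q2 - p2)) (q1 - q2)
      have t4 := norm_sub_le (h v - p2) (q2 - p2)
      linarith
    have n1 : ‖h v‖ = 1 := unit (g v) (gpos v hvr)
    have n2 : ‖h (u x)‖ = 1 := unit (g (u x)) (gpos _ hwr)
    have ip : 0 < ⟪h v, h (u x)⟫ := by
      have := norm_sub_sq_real (h v) (h (u x))
      rw [n1, n2] at this
      nlinarith [norm_nonneg (h v - h (u x))]
    have : g (u x) = ‖g (u x)‖ • h (u x) := by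
      simp only [hh]
      rw [smul_smul, mul_inv_cancel₀ (gpos _ hwr).ne', one_smul]
    rw [this, real_inner_smul_right]
    exact mul_pos (gpos _ hwr) ip
  have hint : Integrable (fun x => g (u x)) μ :=
    Integrable.of_bound (hg_cont.comp hu).aestronglyMeasurable M
      (Eventually.of_forall fun x => hg_bdd _)
  intro h0
  have e := integral_inner (𝕜 := ℝ) hint (h v)
  rw [h0, inner_zero_right] at e
  have hp := (integral_pos_iff_support_of_nonneg (μ := μ) (fun x => (key x).le)
    (hint.const_inner (𝕜 := ℝ) (h v))).2 (by
      have : Function.support (fun x => ⟪h v, g (u x)⟫) = Set.univ := by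
        ext x; simpa using (key x).ne'
      rw [this]
      exact Measure.measure_univ_pos.2 hμ)
  exact hp.ne' e
end

section
/- Let k ≥ 1, let X be a compact topological space equipped with a nonzero finite Borel measure μ, and let g : ℝᵏ → ℝᵏ be continuous and bounded such that there exists ρ > 0 with g(w) ≠ 0 whenever ‖w‖ ≥ ρ, and such that there exists a continuous map φ : S^{k-1} → S^{k-1} with g(rz)/‖g(rz)‖ → φ(z) as r → ∞, uniformly for z ∈ S^{k-1}. Let C > 0, let u_n : X → ℝᵏ be a sequence of continuous functions with averages ū_n := (1/μ(X)) ∫_X u_n dμ satisfying sup_{x ∈ X} ‖u_n(x) − ū_n‖ ≤ C for all n, ‖ū_n‖ → ∞, and ū_n/‖ū_n‖ → z for some z ∈ S^{k-1}. Then there exists n₀ such that for all n ≥ n₀, ⟨∫_X g(u_n(x)) dμ(x), φ(z)⟩ ≥ (1/4) ∫_X ‖g(u_n(x))‖ dμ(x) > 0; in particular ∫_X g(u_n(x)) dμ(x) ≠ 0 for all n ≥ n₀. -/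
open MeasureTheory Filter
open scoped RealInnerProductSpace

/-- The quantitative conclusion established in the proof of Lemma 1 of the paper: along any
sequence of continuous functions `u n` with uniformly bounded oscillation around their
averages `ū n`, with `‖ū n‖ → ∞` and `ū n / ‖ū n‖ → z`, eventually
`⟨∫ g (u n x) dμ, φ z⟩ ≥ (1/4) ∫ ‖g (u n x)‖ dμ > 0`, so in particular
`∫ g (u n x) dμ ≠ 0`. -/
theorem stmt_7 (k : ℕ) (hk : 1 ≤ k)
    (X : Type*) [TopologicalSpace X] [CompactSpace X]
    [MeasurableSpace X] [BorelSpace X]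
    (μ : Measure X) [IsFiniteMeasure μ] (hμ : μ ≠ 0)
    (g : EuclideanSpace ℝ (Fin k) → EuclideanSpace ℝ (Fin k))
    (hg_cont : Continuous g)
    (M : ℝ) (hg_bdd : ∀ w, ‖g w‖ ≤ M)
    (ρ : ℝ) (hρ : 0 < ρ)
    (hg_ne : ∀ w : EuclideanSpace ℝ (Fin k), ρ ≤ ‖w‖ → g w ≠ 0)
    (φ : EuclideanSpace ℝ (Fin k) → EuclideanSpace ℝ (Fin k))
    (hφ_cont : ContinuousOn φ {z : EuclideanSpace ℝ (Fin k) | ‖z‖ = 1})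
    (hφ_sphere : ∀ z : EuclideanSpace ℝ (Fin k), ‖z‖ = 1 → ‖φ z‖ = 1)
    (hφ : ∀ ε > (0 : ℝ), ∃ r₀ : ℝ, ρ ≤ r₀ ∧ ∀ r : ℝ, r₀ ≤ r →
      ∀ z : EuclideanSpace ℝ (Fin k), ‖z‖ = 1 →
        ‖‖g (r • z)‖⁻¹ • g (r • z) - φ z‖ ≤ ε)
    (C : ℝ) (hC : 0 < C)
    (u : ℕ → X → EuclideanSpace ℝ (Fin k))
    (hu_cont : ∀ n : ℕ, Continuous (u n))
    (ubar : ℕ → EuclideanSpace ℝ (Fin k))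
    (hubar : ∀ n : ℕ, ubar n = (μ Set.univ).toReal⁻¹ • ∫ x, u n x ∂μ)
    (hbd : ∀ n : ℕ, ∀ x : X, ‖u n x - ubar n‖ ≤ C)
    (hnorm : Tendsto (fun n => ‖ubar n‖) atTop atTop)
    (z : EuclideanSpace ℝ (Fin k)) (hz : ‖z‖ = 1)
    (hdir : Tendsto (fun n => ‖ubar n‖⁻¹ • ubar n) atTop (nhds z)) :
    ∃ n₀ : ℕ, ∀ n ≥ n₀,
      (1 / 4 : ℝ) * (∫ x, ‖g (u n x)‖ ∂μ) ≤ ⟪∫ x, g (u n x) ∂μ, φ z⟫ ∧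
      0 < ∫ x, ‖g (u n x)‖ ∂μ ∧ (∫ x, g (u n x) ∂μ) ≠ 0 := by
  obtain ⟨δ, hδ, hδφ⟩ := Metric.continuousOn_iff.mp hφ_cont z hz (1/4) (by norm_num)
  obtain ⟨r₀, hr₀, hr⟩ := hφ (1/4) (by norm_num)
  have e1 := hnorm.eventually_ge_atTop (r₀ + C)
  have e2 := hnorm.eventually_ge_atTop (4 * C / δ)
  have e3 := Metric.tendsto_nhds.mp hdir (δ/2) (by positivity)
  obtain ⟨n₀, hn₀⟩ := eventually_atTop.mp (e1.and (e2.and e3))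
  refine ⟨n₀, fun n hn => ?_⟩
  obtain ⟨h1, h2, h3⟩ := hn₀ n hn
  have hUpos : 0 < ‖ubar n‖ := by linarith
  have hvr : ∀ x, r₀ ≤ ‖u n x‖ := by
    intro x
    have a := hbd n x
    have b := norm_sub_norm_le (ubar n) (u n x)
    rw [norm_sub_rev] at b
    linarith
  have hne : ∀ x, g (u n x) ≠ 0 := fun x => hg_ne _ (hr₀.trans (hvr x))
  have hpt : ∀ x, (1/4 : ℝ) * ‖g (u n x)‖ ≤ ⟪g (u n x), φ z⟫ := by
    intro x
    have hvpos : 0 < ‖u n x‖ := by linarith [hvr x]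
    have hgpos : 0 < ‖g (u n x)‖ := norm_pos_iff.mpr (hne x)
    have hw : ‖‖u n x‖⁻¹ • u n x‖ = 1 := by
      rw [norm_smul, norm_inv, norm_norm, inv_mul_cancel₀ hvpos.ne']
    have hd : ‖‖u n x‖⁻¹ • u n x - ‖ubar n‖⁻¹ • ubar n‖ ≤ δ / 2 := by
      have key : ‖u n x‖⁻¹ • u n x - ‖ubar n‖⁻¹ • ubar n
          = ‖ubar n‖⁻¹ • ((‖ubar n‖ - ‖u n x‖) • (‖u n x‖⁻¹ • u n x) + (u n x - ubar n)) := by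
        rw [sub_smul, smul_smul ‖u n x‖, mul_inv_cancel₀ hvpos.ne', one_smul, smul_add, smul_sub,
          smul_smul ‖ubar n‖⁻¹ ‖ubar n‖, inv_mul_cancel₀ hUpos.ne', one_smul, smul_sub]
        abel
      have hA : ‖(‖ubar n‖ - ‖u n x‖) • (‖u n x‖⁻¹ • u n x) + (u n x - ubar n)‖ ≤ 2 * C := by
        refine (norm_add_le _ _).trans ?_
        rw [norm_smul, hw, mul_one, Real.norm_eq_abs]
        have a := abs_norm_sub_norm_le (ubar n) (u n x)
        rw [norm_sub_rev] at a
        linarith [hbd n x]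
      rw [key, norm_smul, norm_inv, norm_norm, inv_mul_le_iff₀ hUpos]
      rw [div_le_iff₀ hδ] at h2
      linarith
    have hwz : dist (‖u n x‖⁻¹ • u n x) z < δ := by
      have := dist_triangle (‖u n x‖⁻¹ • u n x) (‖ubar n‖⁻¹ • ubar n) z
      rw [dist_eq_norm (‖u n x‖⁻¹ • u n x) (‖ubar n‖⁻¹ • ubar n)] at this
      linarith
    have hφ1 := hδφ _ hw hwz
    rw [dist_eq_norm] at hφ1
    have hg1 := hr _ (hvr x) _ hw
    rw [smul_smul ‖u n x‖, mul_inv_cancel₀ hvpos.ne', one_smul] at hg1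
    have ht : ‖‖g (u n x)‖⁻¹ • g (u n x) - φ z‖ ≤ 1/2 := by
      have := norm_sub_le_norm_sub_add_norm_sub (‖g (u n x)‖⁻¹ • g (u n x))
        (φ (‖u n x‖⁻¹ • u n x)) (φ z)
      linarith
    have hi := (abs_le.mp (abs_real_inner_le_norm
      (‖g (u n x)‖⁻¹ • g (u n x) - φ z) (φ z))).1
    rw [inner_sub_left, real_inner_self_eq_norm_sq, hφ_sphere z hz, real_inner_smul_left] at hi
    have h4 : (1/4 : ℝ) ≤ ‖g (u n x)‖⁻¹ * ⟪g (u n x), φ z⟫ := by linarith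
    rw [← div_eq_inv_mul, le_div_iff₀ hgpos] at h4
    exact h4
  have hcont : Continuous fun x => g (u n x) := hg_cont.comp (hu_cont n)
  have hnint : Integrable (fun x => ‖g (u n x)‖) μ := by
    refine Integrable.of_bound hcont.norm.measurable.aestronglyMeasurable M ?_
    exact Eventually.of_forall fun x => by simpa using hg_bdd (u n x)
  have hint : Integrable (fun x => g (u n x)) μ := by
    refine Integrable.of_bound hcont.measurable.aestronglyMeasurable M ?_
    exact Eventually.of_forall fun x => hg_bdd (u n x)
  have hinner : ∫ x, ⟪g (u n x), φ z⟫ ∂μ = ⟪∫ x, g (u n x) ∂μ, φ z⟫ := by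
    rw [real_inner_comm, ← integral_inner hint (φ z)]
    simp_rw [real_inner_comm]
  have hA : (1 / 4 : ℝ) * (∫ x, ‖g (u n x)‖ ∂μ) ≤ ⟪∫ x, g (u n x) ∂μ, φ z⟫ := by
    rw [← hinner, ← integral_const_mul]
    exact integral_mono (hnint.const_mul _) (hint.inner_const (φ z)) hpt
  have hB : 0 < ∫ x, ‖g (u n x)‖ ∂μ := by
    rw [integral_pos_iff_support_of_nonneg (fun x => norm_nonneg _) hnint]
    have : Function.support (fun x => ‖g (u n x)‖) = Set.univ := by
      ext x; simp [hne x]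
    rw [this]
    exact Measure.measure_univ_pos.mpr hμ
  refine ⟨hA, hB, fun h0 => ?_⟩
  rw [h0, inner_zero_left] at hA
  linarith
end
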